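/- For every real q with 0 < q < 1 one has ∏_{k=0}^∞ (1 + q^(k+1/2))² = (∑_{n∈ℤ} q^(n²/2)) / ∏_{k=1}^∞ (1 − q^k). -/

import Mathlib

open scoped BigOperators

/-!
With `r = √q`, all the real powers are natural powers of `r`, and the identity is the case `z = 1`
of Jacobi's triple product. The latter is the limit `N → ∞` of its finite form
`∏_{k<N} (1 + z r^(2k+1)) (1 + z⁻¹ r^(2k+1)) = ∑_n [2N choose N+n]_{r²} z^n r^(n²)`.
Adding one factor to either product on the left corresponds to one of the two `q`-Pascal rules on
the right. Since `(q; q)_N` converges to a nonzero limit, the Gaussian binomials are uniformly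
bounded and each tends to `1 / ∏_{k≥1} (1 - r^(2k))`, so dominated convergence applies.
-/

open Filter Topology

section GaussianBinomial

variable {R : Type*} [CommRing R] (q : R)

/-- The Gaussian binomial coefficient `[n choose k]_q`, given by the `q`-Pascal rule. The lower
index ranges over all integers, with value `0` outside `0 ≤ k ≤ n`, so that sums over `k` need no
boundary terms; `toNat` only truncates where the coefficient it multiplies is `0`. -/
def gaussianBinom : ℕ → ℤ → R
  | 0, k => if k = 0 then 1 else 0
  | n + 1, k => gaussianBinom n (k - 1) + q ^ k.toNat * gaussianBinom n k

/-- The `q`-Pochhammer symbol `(q; q)_n = (1 - q) (1 - q ^ 2) ⋯ (1 - q ^ n)`, through which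
Gaussian binomial coefficients are quotients like ordinary ones through factorials. -/
def qPochhammer (n : ℕ) : R := ∏ k ∈ Finset.range n, (1 - q ^ (k + 1))

lemma gaussianBinom_succ (n : ℕ) (k : ℤ) :
    gaussianBinom q (n + 1) k = gaussianBinom q n (k - 1) + q ^ k.toNat * gaussianBinom q n k :=
  rfl

lemma gaussianBinom_of_notMem_Icc {n : ℕ} {k : ℤ} (hk : k ∉ Set.Icc 0 (n : ℤ)) :
    gaussianBinom q n k = 0 := by
  rw [Set.mem_Icc] at hk
  induction n generalizing k with
  | zero => exact if_neg (by omega)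
  | succ n ih => rw [gaussianBinom_succ, ih (by omega), ih (by omega), mul_zero, add_zero]

lemma gaussianBinom_zero_right (n : ℕ) : gaussianBinom q n 0 = 1 := by
  induction n with
  | zero => exact if_pos rfl
  | succ n ih =>
    rw [gaussianBinom_succ, ih, gaussianBinom_of_notMem_Icc q (by simp)]
    simp

lemma gaussianBinom_succ' (n : ℕ) (k : ℤ) :
    gaussianBinom q (n + 1) k =
      gaussianBinom q n k + q ^ (n + 1 - k).toNat * gaussianBinom q n (k - 1) := by
  induction n generalizing k with
  | zero =>
    rcases eq_or_ne k 0 with rfl | hk0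
    · simp [gaussianBinom]
    rcases eq_or_ne k 1 with rfl | hk1
    · simp [gaussianBinom]
    · simp [gaussianBinom, hk0, sub_eq_zero, hk1]
  | succ n ih =>
    have middle : q ^ k.toNat * q ^ (n + 1 - k).toNat * gaussianBinom q n (k - 1) =
        q ^ (n + 2 - k).toNat * q ^ (k - 1).toNat * gaussianBinom q n (k - 1) := by
      by_cases hk : k - 1 ∈ Set.Icc 0 (n : ℤ)
      · rw [Set.mem_Icc] at hk
        rw [← pow_add, ← pow_add]
        congr 2
        omega
      · simp only [gaussianBinom_of_notMem_Icc q hk, mul_zero]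
    have hsub : (n : ℤ) + 1 - (k - 1) = n + 2 - k := by ring
    have hadd : ((n + 1 : ℕ) : ℤ) + 1 - k = n + 2 - k := by push_cast; ring
    rw [gaussianBinom_succ q (n + 1), hadd]
    have pascal := gaussianBinom_succ q n k
    have pascal_pred := gaussianBinom_succ q n (k - 1)
    have ih_pred := ih (k - 1)
    rw [hsub] at ih_pred
    linear_combination ih_pred + q ^ k.toNat * ih k - pascal -
      q ^ (n + 2 - k).toNat * pascal_pred + middle

lemma one_sub_pow_mul_gaussianBinom_succ_succ (n k : ℕ) :
    (1 - q ^ (k + 1)) * gaussianBinom q (n + 1) (k + 1) =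
      (1 - q ^ (n + 1)) * gaussianBinom q n k := by
  by_cases hk : k ≤ n
  · have pascal := gaussianBinom_succ q n (k + 1)
    have pascal' := gaussianBinom_succ' q n (k + 1)
    rw [add_sub_cancel_right, show ((k : ℤ) + 1).toNat = k + 1 by omega] at pascal
    rw [add_sub_cancel_right, show ((n : ℤ) + 1 - (k + 1)).toNat = n - k by omega] at pascal'
    have hpow : q ^ (k + 1) * q ^ (n - k) = q ^ (n + 1) := by
      rw [← pow_add]
      congr 1
      omega
    linear_combination pascal - q ^ (k + 1) * pascal' - gaussianBinom q n k * hpow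
  · rw [gaussianBinom_of_notMem_Icc q (n := n) (by simpa using hk),
      gaussianBinom_of_notMem_Icc q (n := n + 1) (by rw [Set.mem_Icc]; omega), mul_zero, mul_zero]

lemma qPochhammer_succ (n : ℕ) : qPochhammer q (n + 1) = qPochhammer q n * (1 - q ^ (n + 1)) :=
  Finset.prod_range_succ _ n

lemma gaussianBinom_mul_qPochhammer_mul_qPochhammer (a b : ℕ) :
    gaussianBinom q (a + b) a * (qPochhammer q a * qPochhammer q b) = qPochhammer q (a + b) := by
  induction a with
  | zero => simp [gaussianBinom_zero_right, qPochhammer]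
  | succ a ih =>
    have absorption := one_sub_pow_mul_gaussianBinom_succ_succ q (a + b) a
    rw [add_right_comm a 1 b, qPochhammer_succ, qPochhammer_succ]
    push_cast
    linear_combination qPochhammer q a * qPochhammer q b * absorption + (1 - q ^ (a + b + 1)) * ih

end GaussianBinomial

section FiniteTripleProduct

variable {K : Type*} [Field K]

lemma gaussianBinom_theta_succ_left {z : K} (hz : z ≠ 0) (r : K) (M N : ℕ) (n : ℤ) :
    gaussianBinom (r ^ 2) (M + 1 + N) (N + n) * (z ^ n * r ^ (n.natAbs ^ 2)) =
      gaussianBinom (r ^ 2) (M + N) (N + n) * (z ^ n * r ^ (n.natAbs ^ 2)) +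
        z * r ^ (2 * M + 1) * (gaussianBinom (r ^ 2) (M + N) (N + (n - 1)) *
          (z ^ (n - 1) * r ^ ((n - 1).natAbs ^ 2))) := by
  have hpow : gaussianBinom (r ^ 2) (M + N) (N + (n - 1)) *
        ((r ^ 2) ^ ((M + N : ℕ) + 1 - (N + n) : ℤ).toNat * r ^ (n.natAbs ^ 2)) =
      gaussianBinom (r ^ 2) (M + N) (N + (n - 1)) *
        (r ^ (2 * M + 1) * r ^ ((n - 1).natAbs ^ 2)) := by
    by_cases hn : (N : ℤ) + (n - 1) ∈ Set.Icc 0 ((M + N : ℕ) : ℤ)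
    · rw [Set.mem_Icc] at hn
      rw [← pow_mul, ← pow_add, ← pow_add]
      congr 2
      zify
      rw [Int.toNat_of_nonneg (by omega), sq_abs, sq_abs]
      ring
    · simp only [gaussianBinom_of_notMem_Icc _ hn, zero_mul]
  have hzpow : z ^ n = z * z ^ (n - 1) := by rw [← zpow_one_add₀ hz, add_sub_cancel]
  rw [add_right_comm M 1 N, gaussianBinom_succ', add_sub_assoc (N : ℤ) n 1, hzpow]
  linear_combination z * z ^ (n - 1) * hpow

lemma gaussianBinom_theta_succ_right {z : K} (hz : z ≠ 0) (r : K) (M N : ℕ) (n : ℤ) :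
    gaussianBinom (r ^ 2) (M + (N + 1)) ((N + 1 : ℕ) + n) * (z ^ n * r ^ (n.natAbs ^ 2)) =
      gaussianBinom (r ^ 2) (M + N) (N + n) * (z ^ n * r ^ (n.natAbs ^ 2)) +
        z⁻¹ * r ^ (2 * N + 1) * (gaussianBinom (r ^ 2) (M + N) (N + (n + 1)) *
          (z ^ (n + 1) * r ^ ((n + 1).natAbs ^ 2))) := by
  have hpow : gaussianBinom (r ^ 2) (M + N) (N + (n + 1)) *
        ((r ^ 2) ^ (N + (n + 1) : ℤ).toNat * r ^ (n.natAbs ^ 2)) =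
      gaussianBinom (r ^ 2) (M + N) (N + (n + 1)) *
        (r ^ (2 * N + 1) * r ^ ((n + 1).natAbs ^ 2)) := by
    by_cases hn : (N : ℤ) + (n + 1) ∈ Set.Icc 0 ((M + N : ℕ) : ℤ)
    · rw [Set.mem_Icc] at hn
      rw [← pow_mul, ← pow_add, ← pow_add]
      congr 2
      zify
      rw [Int.toNat_of_nonneg (by omega), sq_abs, sq_abs]
      ring
    · simp only [gaussianBinom_of_notMem_Icc _ hn, zero_mul]
  have hzpow : z ^ n = z⁻¹ * z ^ (n + 1) := by rw [zpow_add_one₀ hz]; field_simp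
  have hindex : ((N + 1 : ℕ) : ℤ) + n = N + (n + 1) := by push_cast; ring
  rw [← add_assoc M N 1, hindex, gaussianBinom_succ, show (N : ℤ) + (n + 1) - 1 = N + n by ring,
    hzpow]
  linear_combination z⁻¹ * z ^ (n + 1) * hpow

variable [TopologicalSpace K] [IsTopologicalRing K]

theorem hasSum_gaussianBinom_theta {z : K} (hz : z ≠ 0) (r : K) (M N : ℕ) :
    HasSum (fun n : ℤ ↦ gaussianBinom (r ^ 2) (M + N) (N + n) * (z ^ n * r ^ (n.natAbs ^ 2)))
      ((∏ k ∈ Finset.range M, (1 + z * r ^ (2 * k + 1))) *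
        ∏ k ∈ Finset.range N, (1 + z⁻¹ * r ^ (2 * k + 1))) := by
  induction N with
  | zero =>
    induction M with
    | zero =>
      convert hasSum_ite_eq (0 : ℤ) (1 : K) using 2 with n
      · split_ifs with hn <;> simp [gaussianBinom, hn]
      · simp
    | succ M ih =>
      have shifted := ((Equiv.subRight (1 : ℤ)).hasSum_iff.2 ih).mul_left (z * r ^ (2 * M + 1))
      convert ih.add shifted using 1
      · exact funext fun n ↦ gaussianBinom_theta_succ_left hz r M 0 n
      · rw [Finset.prod_range_succ]; ring
  | succ N ih =>
    have shifted := ((Equiv.addRight (1 : ℤ)).hasSum_iff.2 ih).mul_left (z⁻¹ * r ^ (2 * N + 1))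
    convert ih.add shifted using 1
    · exact funext fun n ↦ gaussianBinom_theta_succ_right hz r M N n
    · rw [Finset.prod_range_succ]; ring

end FiniteTripleProduct

section Limit

variable {𝕜 : Type*} [NormedField 𝕜] {q : 𝕜}

lemma one_sub_pow_succ_ne_zero (hq : ‖q‖ < 1) (k : ℕ) : 1 - q ^ (k + 1) ≠ 0 := by
  have hlt : ‖q ^ (k + 1)‖ < 1 := by
    rw [norm_pow]
    exact pow_lt_one₀ (norm_nonneg q) hq k.succ_ne_zero
  intro h
  rw [← sub_eq_zero.1 h, norm_one] at hlt
  exact lt_irrefl _ hlt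

lemma qPochhammer_ne_zero (hq : ‖q‖ < 1) (n : ℕ) : qPochhammer q n ≠ 0 :=
  Finset.prod_ne_zero_iff.2 fun k _ ↦ one_sub_pow_succ_ne_zero hq k

lemma gaussianBinom_eq_div (hq : ‖q‖ < 1) (a b : ℕ) :
    gaussianBinom q (a + b) a = qPochhammer q (a + b) / (qPochhammer q a * qPochhammer q b) :=
  eq_div_of_mul_eq (mul_ne_zero (qPochhammer_ne_zero hq a) (qPochhammer_ne_zero hq b))
    (gaussianBinom_mul_qPochhammer_mul_qPochhammer q a b)

lemma summable_norm_neg_pow_succ (hq : ‖q‖ < 1) : Summable fun k : ℕ ↦ ‖-q ^ (k + 1)‖ := by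
  simp only [norm_neg]
  exact (summable_nat_add_iff (f := fun k ↦ ‖q ^ k‖) 1).2
    (summable_norm_geometric_of_norm_lt_one hq)

lemma summable_norm_zpow_mul_pow_natAbs_sq {r : 𝕜} (hr : ‖r‖ < 1) (z : 𝕜) :
    Summable fun n : ℤ ↦ ‖z ^ n * r ^ (n.natAbs ^ 2)‖ := by
  have half_line (w : 𝕜) : Summable fun n : ℕ ↦ ‖w ^ n * r ^ (n ^ 2)‖ := by
    have hlim : Tendsto (fun n : ℕ ↦ ‖w * r ^ n‖) atTop (𝓝 0) := by
      simpa using ((tendsto_pow_atTop_nhds_zero_of_norm_lt_one hr).const_mul w).norm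
    refine summable_geometric_two.of_norm_bounded_eventually_nat ?_
    filter_upwards [hlim.eventually_le_const one_half_pos] with n hn
    rw [norm_norm, sq n, pow_mul, ← mul_pow, norm_pow]
    exact pow_le_pow_left₀ (norm_nonneg _) hn n
  exact .of_nat_of_neg (by simpa using half_line z) (by simpa using half_line z⁻¹)

variable [CompleteSpace 𝕜]

lemma tprod_one_sub_pow_succ_ne_zero (hq : ‖q‖ < 1) : ∏' k : ℕ, (1 - q ^ (k + 1)) ≠ 0 := by
  simp only [sub_eq_add_neg]
  refine tprod_one_add_ne_zero_of_summable (fun k ↦ ?_) (summable_norm_neg_pow_succ hq)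
  rw [← sub_eq_add_neg]
  exact one_sub_pow_succ_ne_zero hq k

lemma tendsto_qPochhammer (hq : ‖q‖ < 1) :
    Tendsto (qPochhammer q) atTop (𝓝 (∏' k : ℕ, (1 - q ^ (k + 1)))) := by
  have hmul : Multipliable fun k : ℕ ↦ 1 - q ^ (k + 1) := by
    simp only [sub_eq_add_neg]
    exact multipliable_one_add_of_summable (summable_norm_neg_pow_succ hq)
  exact hmul.tendsto_prod_tprod_nat

lemma exists_norm_gaussianBinom_le (hq : ‖q‖ < 1) :
    ∃ C, ∀ (n : ℕ) (k : ℤ), ‖gaussianBinom q n k‖ ≤ C := by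
  have hlim := tendsto_qPochhammer hq
  obtain ⟨A, hA⟩ := hlim.norm.bddAbove_range
  obtain ⟨B, hB⟩ := (hlim.inv₀ (tprod_one_sub_pow_succ_ne_zero hq)).norm.bddAbove_range
  replace hA n : ‖qPochhammer q n‖ ≤ A := hA ⟨n, rfl⟩
  replace hB n : ‖(qPochhammer q n)⁻¹‖ ≤ B := hB ⟨n, rfl⟩
  have hA0 : 0 ≤ A := (norm_nonneg _).trans (hA 0)
  have hB0 : 0 ≤ B := (norm_nonneg _).trans (hB 0)
  refine ⟨A * (B * B), fun n k ↦ ?_⟩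
  by_cases hk : k ∈ Set.Icc 0 (n : ℤ)
  · lift k to ℕ using hk.1
    obtain ⟨m, rfl⟩ := Nat.exists_eq_add_of_le (Nat.cast_le.1 hk.2)
    rw [gaussianBinom_eq_div hq, div_eq_mul_inv, mul_inv, norm_mul, norm_mul]
    gcongr
    exacts [hA _, hB _, hB _]
  · rw [gaussianBinom_of_notMem_Icc q hk, norm_zero]
    positivity

lemma tendsto_gaussianBinom_central (hq : ‖q‖ < 1) (n : ℤ) :
    Tendsto (fun N : ℕ ↦ gaussianBinom q (N + N) (N + n)) atTop
      (𝓝 (∏' k : ℕ, (1 - q ^ (k + 1)))⁻¹) := by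
  set L := ∏' k : ℕ, (1 - q ^ (k + 1))
  have hL : L ≠ 0 := tprod_one_sub_pow_succ_ne_zero hq
  have hshift (m : ℤ) : Tendsto (fun N : ℕ ↦ qPochhammer q (N + m).toNat) atTop (𝓝 L) :=
    (tendsto_qPochhammer hq).comp <| tendsto_atTop.2 fun b ↦ by
      filter_upwards [eventually_ge_atTop (b + m.natAbs)] with N hN
      omega
  have hdouble : Tendsto (fun N : ℕ ↦ qPochhammer q (N + N)) atTop (𝓝 L) :=
    (tendsto_qPochhammer hq).comp (tendsto_id.atTop_add_atTop tendsto_id)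
  have hquot := hdouble.div ((hshift n).mul (hshift (-n))) (mul_ne_zero hL hL)
  rw [div_mul_cancel_left₀ hL] at hquot
  refine hquot.congr' ?_
  filter_upwards [eventually_ge_atTop n.natAbs] with N hN
  have hsum : N + N = (N + n).toNat + (N + -n).toNat := by omega
  have hleft : (N : ℤ) + n = (N + n).toNat := by omega
  simp only [Pi.div_apply]
  rw [hsum, ← gaussianBinom_eq_div hq, ← hleft]

lemma multipliable_one_add_mul_pow_odd {r : 𝕜} (hr : ‖r‖ < 1) (z : 𝕜) :
    Multipliable fun k : ℕ ↦ 1 + z * r ^ (2 * k + 1) := by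
  have hodd : Function.Injective fun k : ℕ ↦ 2 * k + 1 := fun a b h ↦ by simpa using h
  refine multipliable_one_add_of_summable ?_
  simpa only [norm_mul, Function.comp_def] using
    ((summable_norm_geometric_of_norm_lt_one hr).comp_injective hodd).mul_left ‖z‖

/-- Jacobi's triple product identity. -/
theorem stmt7_general {r z : 𝕜} (hr : ‖r‖ < 1) (hz : z ≠ 0) :
    ∏' k : ℕ, (1 + z * r ^ (2 * k + 1)) * (1 + z⁻¹ * r ^ (2 * k + 1)) =
      (∑' n : ℤ, z ^ n * r ^ (n.natAbs ^ 2)) / ∏' k : ℕ, (1 - (r ^ 2) ^ (k + 1)) := by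
  have hq : ‖r ^ 2‖ < 1 := by
    rw [norm_pow]
    exact pow_lt_one₀ (norm_nonneg r) hr two_ne_zero
  obtain ⟨C, hC⟩ := exists_norm_gaussianBinom_le hq
  have tendsto_sum := tendsto_tsum_of_dominated_convergence
    ((summable_norm_zpow_mul_pow_natAbs_sq hr z).mul_left C)
    (fun n ↦ (tendsto_gaussianBinom_central hq n).mul_const (z ^ n * r ^ (n.natAbs ^ 2)))
    (.of_forall fun N n ↦ (norm_mul_le _ _).trans (by gcongr; exact hC _ _))
  have tendsto_prod := ((multipliable_one_add_mul_pow_odd hr z).mul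
    (multipliable_one_add_mul_pow_odd hr z⁻¹)).tendsto_prod_tprod_nat
  simp only [(hasSum_gaussianBinom_theta hz r _ _).tsum_eq, ← Finset.prod_mul_distrib]
    at tendsto_sum
  rw [tendsto_nhds_unique tendsto_prod tendsto_sum, tsum_mul_left, div_eq_inv_mul]

end Limit

lemma rpow_natCast_add_half {q : ℝ} (hq : 0 ≤ q) (k : ℕ) :
    q ^ ((k : ℝ) + 1 / 2) = √q ^ (2 * k + 1) := by
  rw [← Real.rpow_natCast, ← Real.rpow_div_two_eq_sqrt _ hq]
  congr 1
  push_cast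
  ring

lemma rpow_intCast_sq_div_two {q : ℝ} (hq : 0 ≤ q) (n : ℤ) :
    q ^ ((n : ℝ) ^ 2 / 2) = √q ^ (n.natAbs ^ 2) := by
  rw [Real.rpow_div_two_eq_sqrt _ hq, ← Real.rpow_natCast √q, Nat.cast_pow, Nat.cast_natAbs,
    Int.cast_abs, sq_abs]

/-- Bosonization of two Neveu–Schwarz fermions (Jacobi triple product consequence):
    `∏_{k=0}^∞ (1+q^(k+1/2))² = (∑_{n∈ℤ} q^(n²/2)) / ∏_{k=1}^∞ (1−q^k)`. -/
theorem stmt7 (q : ℝ) (hq0 : 0 < q) (hq1 : q < 1) :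
    (∏' k : ℕ, (1 + q ^ ((k : ℝ) + 1 / 2)) ^ 2) =
      (∑' n : ℤ, q ^ ((n : ℝ) ^ 2 / 2)) / ∏' k : ℕ, (1 - q ^ (k + 1)) := by
  have hr : ‖√q‖ < 1 := by
    rwa [Real.norm_of_nonneg (Real.sqrt_nonneg q), Real.sqrt_lt' one_pos, one_pow]
  simp only [rpow_natCast_add_half hq0.le, rpow_intCast_sq_div_two hq0.le]
  simpa [Real.sq_sqrt hq0.le, ← sq] using stmt7_general hr one_ne_zero
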